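/- For every involution θ in the Weyl group W(Bₙ), the lengths of θ and of −θ are complementary: ℓ(−θ) = n(n+1)/2 − ℓ(θ), where ℓ(θ) := (1/2)|{α ∈ Δ⁺ : θα ∉ Δ⁺}| + (1/2) dim ker(θ + id). Equivalently, |{α ∈ Δ⁺ : θα ∈ Δ⁺}| + dim ker(θ − id) = 2·ℓ(−θ). -/

import Mathlib

open scoped RealInnerProductSpace

noncomputable section

/-- Euclidean space `ℝⁿ`. -/
abbrev EucB (n : ℕ) := EuclideanSpace ℝ (Fin n)

/-- The `i`-th standard basis vector of `ℝⁿ`. -/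
def eB (n : ℕ) (i : Fin n) : EucB n := EuclideanSpace.single i (1 : ℝ)

/-- The root system `Δ` of type `Bₙ`:
`{±eᵢ ± eⱼ : i < j} ∪ {±eᵢ}`. -/
def DeltaB (n : ℕ) : Set (EucB n) :=
  {v | (∃ i j : Fin n, i < j ∧
          (v = eB n i + eB n j ∨ v = eB n i - eB n j ∨
           v = -eB n i + eB n j ∨ v = -eB n i - eB n j)) ∨
        ∃ i : Fin n, v = eB n i ∨ v = -eB n i}

/-- The positive system `Δ⁺ = {eᵢ ± eⱼ : i < j} ∪ {eᵢ}`. -/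
def DeltaBpos (n : ℕ) : Set (EucB n) :=
  {v | (∃ i j : Fin n, i < j ∧ (v = eB n i + eB n j ∨ v = eB n i - eB n j)) ∨
        ∃ i : Fin n, v = eB n i}

/-- The coroot `α∨ = 2α/⟪α,α⟫`. -/
def corootB (n : ℕ) (α : EucB n) : EucB n := (2 / ⟪α, α⟫) • α

/-- The linear functional `x ↦ ⟪x, α∨⟫`. -/
def corootForm (n : ℕ) (α : EucB n) : Module.Dual ℝ (EucB n) where
  toFun x := ⟪x, corootB n α⟫
  map_add' x y := inner_add_left _ _ _
  map_smul' c x := by simpa using real_inner_smul_left x (corootB n α) c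

/-- The reflection `s_α(x) = x − ⟪x, α∨⟫ α` as a linear automorphism of `ℝⁿ`
(for `α` a root, the branch condition `⟪α, α∨⟫ = 2` holds). -/
def sReflB (n : ℕ) (α : EucB n) : EucB n ≃ₗ[ℝ] EucB n :=
  if h : corootForm n α α = 2 then Module.reflection h else LinearEquiv.refl ℝ (EucB n)

/-- The Weyl group `W(Bₙ)`, the subgroup of linear automorphisms of `ℝⁿ` generated by the
reflections in the roots of `Δ`. -/
def WeylB (n : ℕ) : Subgroup (EucB n ≃ₗ[ℝ] EucB n) :=
  Subgroup.closure {g | ∃ α ∈ DeltaB n, g = sReflB n α}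


/-- The length of an involution `θ ∈ W(Bₙ)`:
`ℓ(θ) = (1/2)|{α ∈ Δ⁺ : θα ∉ Δ⁺}| + (1/2) dim ker(θ + id)`, as a rational number. -/
def lenB (n : ℕ) (θ : EucB n ≃ₗ[ℝ] EucB n) : ℚ :=
  (Nat.card {α : EucB n // α ∈ DeltaBpos n ∧ θ α ∉ DeltaBpos n} : ℚ) / 2 +
    (Module.finrank ℝ ↥(LinearMap.ker (θ.toLinearMap + LinearMap.id)) : ℚ) / 2

/-- The negative `−θ` of a linear automorphism, as a linear automorphism. -/
def negB (n : ℕ) (θ : EucB n ≃ₗ[ℝ] EucB n) : EucB n ≃ₗ[ℝ] EucB n :=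
  (LinearEquiv.neg ℝ) * θ

/-! Since `−θ` maps a root to a positive root exactly when `θ` maps it to a negative one, passing
from `θ` to `−θ` exchanges `{α ∈ Δ⁺ : θα ∈ Δ⁺}` with its complement in `Δ⁺`, just as it exchanges
the two eigenspaces of `θ`. Hence `2ℓ(θ) + 2ℓ(−θ) = |Δ⁺| + n = n² + n`. All this rests
on `W` preserving `Δ`: the roots are the vectors of squared norm `1` or `2` in `ℤⁿ`, and each `s_α`
is an isometry preserving `ℤⁿ`. -/

section Involution

variable {K V : Type*} [Field K] [NeZero (2 : K)] [AddCommGroup V] [Module K V]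

theorem ker_add_id_eq_range_sub_id {f : V →ₗ[K] V} (hf : Function.Involutive f) :
    LinearMap.ker (f + LinearMap.id) = LinearMap.range (f - LinearMap.id) := by
  ext x
  simp only [LinearMap.mem_ker, LinearMap.mem_range, LinearMap.add_apply, LinearMap.sub_apply,
    LinearMap.id_apply]
  constructor
  · intro hx
    refine ⟨-(2⁻¹ : K) • x, ?_⟩
    rw [map_smul, eq_neg_of_add_eq_zero_left hx, smul_neg, neg_smul, neg_neg, sub_neg_eq_add,
      ← add_smul, ← two_mul, mul_inv_cancel₀ two_ne_zero, one_smul]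
  · rintro ⟨y, rfl⟩
    rw [map_sub, hf]
    abel

theorem finrank_ker_add_id_add_finrank_ker_sub_id [FiniteDimensional K V] {f : V →ₗ[K] V}
    (hf : Function.Involutive f) :
    Module.finrank K (LinearMap.ker (f + LinearMap.id)) +
      Module.finrank K (LinearMap.ker (f - LinearMap.id)) = Module.finrank K V := by
  rw [ker_add_id_eq_range_sub_id hf, LinearMap.finrank_range_add_finrank_ker]

end Involution

section IntegralVectors

variable {ι : Type*}

/-- The lattice `ℤ^ι` of vectors with integer coordinates in `ℝ^ι`. -/
def intLattice (ι : Type*) : AddSubgroup (EuclideanSpace ℝ ι) where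
  carrier := {v | ∀ i, v i ∈ (Int.castRingHom ℝ).range}
  zero_mem' _ := zero_mem _
  add_mem' hv hw i := add_mem (hv i) (hw i)
  neg_mem' hv i := neg_mem (hv i)

theorem single_intCast_mem_intLattice [DecidableEq ι] (i : ι) (m : ℤ) :
    EuclideanSpace.single i (m : ℝ) ∈ intLattice ι := by
  intro j
  rw [PiLp.single_apply]
  split_ifs
  exacts [⟨m, rfl⟩, zero_mem _]

theorem intCast_smul_mem_intLattice {v : EuclideanSpace ℝ ι} (hv : v ∈ intLattice ι) (m : ℤ) :
    (m : ℝ) • v ∈ intLattice ι := by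
  rw [Int.cast_smul_eq_zsmul]
  exact zsmul_mem hv m

variable [Fintype ι]

theorem exists_intCast_eq_inner {v w : EuclideanSpace ℝ ι} (hv : v ∈ intLattice ι)
    (hw : w ∈ intLattice ι) : ∃ m : ℤ, (m : ℝ) = ⟪v, w⟫ := by
  rw [PiLp.inner_apply]
  exact sum_mem (S := (Int.castRingHom ℝ).range) fun i _ ↦ mul_mem (hw i) (hv i)

theorem sq_apply_le_inner_self (v : EuclideanSpace ℝ ι) (i : ι) : v i ^ 2 ≤ ⟪v, v⟫ := by
  rw [real_inner_self_eq_norm_sq, EuclideanSpace.real_norm_sq_eq]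
  exact Finset.single_le_sum (fun j _ ↦ sq_nonneg (v j)) (Finset.mem_univ i)

theorem exists_apply_eq_unit_of_mem_intLattice {v : EuclideanSpace ℝ ι} (hv : v ∈ intLattice ι)
    (hv0 : v ≠ 0) (hv4 : ⟪v, v⟫ < 4) : ∃ (i : ι) (u : ℤˣ), v i = (u : ℤ) := by
  obtain ⟨i, hi⟩ : ∃ i, v i ≠ 0 := by
    contrapose! hv0
    exact PiLp.ext hv0
  obtain ⟨m, hm⟩ := hv i
  change (m : ℝ) = v i at hm
  have hm0 : m ≠ 0 := by
    rintro rfl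
    exact hi (by rw [← hm, Int.cast_zero])
  have hm4 : m ^ 2 < 2 ^ 2 := by
    have : (m : ℝ) ^ 2 < 4 := hm ▸ (sq_apply_le_inner_self v i).trans_lt hv4
    exact_mod_cast this
  have hm2 : |m| < 2 := abs_lt_of_sq_lt_sq hm4 zero_le_two
  have hm1 : IsUnit m := Int.isUnit_iff_abs_eq.mpr (by have := abs_pos.mpr hm0; omega)
  exact ⟨i, hm1.unit, hm.symm⟩

variable [DecidableEq ι]

theorem inner_sub_single_self (v : EuclideanSpace ℝ ι) (i : ι) :
    ⟪v - EuclideanSpace.single i (v i), v - EuclideanSpace.single i (v i)⟫ = ⟪v, v⟫ - v i ^ 2 := by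
  simp only [inner_sub_left, inner_sub_right, EuclideanSpace.inner_single_left,
    EuclideanSpace.inner_single_right, PiLp.single_apply, conj_trivial, if_true]
  ring

theorem exists_unit_inner_sub_single_self {v : EuclideanSpace ℝ ι} (hv : v ∈ intLattice ι)
    (hv0 : v ≠ 0) (hv4 : ⟪v, v⟫ < 4) :
    ∃ (i : ι) (u : ℤˣ), v i = (u : ℤ) ∧
      ⟪v - EuclideanSpace.single i ((u : ℤ) : ℝ), v - EuclideanSpace.single i ((u : ℤ) : ℝ)⟫ =
        ⟪v, v⟫ - 1 := by
  obtain ⟨i, u, hu⟩ := exists_apply_eq_unit_of_mem_intLattice hv hv0 hv4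
  refine ⟨i, u, hu, ?_⟩
  rw [← hu, inner_sub_single_self, hu, ← Int.cast_pow, ← Units.val_pow_eq_pow_val, Int.units_sq,
    Units.val_one, Int.cast_one]

theorem exists_eq_single_of_inner_self_eq_one {v : EuclideanSpace ℝ ι} (hv : v ∈ intLattice ι)
    (h : ⟪v, v⟫ = 1) : ∃ (i : ι) (u : ℤˣ), v = EuclideanSpace.single i ((u : ℤ) : ℝ) := by
  have hv0 : v ≠ 0 := inner_self_ne_zero.mp (h ▸ one_ne_zero)
  obtain ⟨i, u, -, hrest⟩ := exists_unit_inner_sub_single_self hv hv0 (by rw [h]; norm_num)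
  rw [h, sub_self] at hrest
  exact ⟨i, u, sub_eq_zero.mp (inner_self_eq_zero.mp hrest)⟩

theorem exists_eq_single_add_single_of_inner_self_eq_two {v : EuclideanSpace ℝ ι}
    (hv : v ∈ intLattice ι) (h : ⟪v, v⟫ = 2) :
    ∃ i j : ι, i ≠ j ∧ ∃ u w : ℤˣ,
      v = EuclideanSpace.single i ((u : ℤ) : ℝ) + EuclideanSpace.single j ((w : ℤ) : ℝ) := by
  have hv0 : v ≠ 0 := inner_self_ne_zero.mp (h ▸ two_ne_zero)
  obtain ⟨i, u, hu, hrest⟩ := exists_unit_inner_sub_single_self hv hv0 (by rw [h]; norm_num)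
  obtain ⟨j, w, hw⟩ := exists_eq_single_of_inner_self_eq_one
    (sub_mem hv (single_intCast_mem_intLattice i u)) (by rw [hrest, h]; norm_num)
  refine ⟨i, j, ?_, u, w, by rw [← hw, add_sub_cancel]⟩
  rintro rfl
  have hwi := congrArg (· i) hw
  simp only [PiLp.sub_apply, PiLp.single_apply, if_true, hu, sub_self] at hwi
  exact w.ne_zero (Int.cast_eq_zero.mp hwi.symm)

end IntegralVectors

section RootSystem

variable {n : ℕ}

theorem inner_eB_eB (i j : Fin n) : ⟪eB n i, eB n j⟫ = if i = j then (1 : ℝ) else 0 :=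
  orthonormal_iff_ite.mp EuclideanSpace.orthonormal_single i j

theorem eB_mem_intLattice (i : Fin n) : eB n i ∈ intLattice (Fin n) := by
  simpa only [eB, Int.cast_one] using single_intCast_mem_intLattice i 1

theorem single_unit_eq_eB_or_neg (i : Fin n) (u : ℤˣ) :
    EuclideanSpace.single i ((u : ℤ) : ℝ) = eB n i ∨
      EuclideanSpace.single i ((u : ℤ) : ℝ) = -eB n i := by
  rcases Int.units_eq_one_or u with rfl | rfl
  · left
    rw [Units.val_one, Int.cast_one, eB]
  · right
    rw [Units.val_neg, Units.val_one, Int.cast_neg, Int.cast_one]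
    exact PiLp.single_neg 2 i

theorem mem_intLattice_of_mem_deltaB {v : EucB n} (hv : v ∈ DeltaB n) :
    v ∈ intLattice (Fin n) := by
  have he := eB_mem_intLattice (n := n)
  rcases hv with ⟨i, j, -, rfl | rfl | rfl | rfl⟩ | ⟨i, rfl | rfl⟩
  exacts [add_mem (he i) (he j), sub_mem (he i) (he j), add_mem (neg_mem (he i)) (he j),
    sub_mem (neg_mem (he i)) (he j), he i, neg_mem (he i)]

theorem inner_self_of_mem_deltaB {v : EucB n} (hv : v ∈ DeltaB n) : ⟪v, v⟫ = 1 ∨ ⟪v, v⟫ = 2 := by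
  rcases hv with ⟨i, j, hij, hv⟩ | ⟨i, rfl | rfl⟩
  · right
    rcases hv with rfl | rfl | rfl | rfl <;>
      simp only [inner_add_left, inner_add_right, inner_sub_left, inner_sub_right, inner_neg_left,
        inner_neg_right, inner_eB_eB, hij.ne, hij.ne', if_true, if_false] <;> norm_num
  · left
    rw [inner_eB_eB, if_pos rfl]
  · left
    rw [inner_neg_neg, inner_eB_eB, if_pos rfl]

theorem mem_deltaB_of_inner_self_eq_one {v : EucB n} (hv : v ∈ intLattice (Fin n))
    (h : ⟪v, v⟫ = 1) : v ∈ DeltaB n := by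
  obtain ⟨i, u, rfl⟩ := exists_eq_single_of_inner_self_eq_one hv h
  exact Or.inr ⟨i, single_unit_eq_eB_or_neg i u⟩

theorem mem_deltaB_of_inner_self_eq_two {v : EucB n} (hv : v ∈ intLattice (Fin n))
    (h : ⟪v, v⟫ = 2) : v ∈ DeltaB n := by
  obtain ⟨i, j, hij, u, w, rfl⟩ := exists_eq_single_add_single_of_inner_self_eq_two hv h
  wlog hlt : i < j generalizing i j u w
  · rw [add_comm] at hv h ⊢
    exact this j i hij.symm w u hv h (lt_of_le_of_ne (not_lt.mp hlt) hij.symm)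
  refine Or.inl ⟨i, j, hlt, ?_⟩
  rcases single_unit_eq_eB_or_neg i u with hi | hi <;>
    rcases single_unit_eq_eB_or_neg j w with hj | hj <;> simp [hi, hj, sub_eq_add_neg]

theorem mem_deltaB_iff {v : EucB n} :
    v ∈ DeltaB n ↔ v ∈ intLattice (Fin n) ∧ (⟪v, v⟫ = 1 ∨ ⟪v, v⟫ = 2) :=
  ⟨fun hv ↦ ⟨mem_intLattice_of_mem_deltaB hv, inner_self_of_mem_deltaB hv⟩,
    fun ⟨hv, h⟩ ↦ h.elim (mem_deltaB_of_inner_self_eq_one hv) (mem_deltaB_of_inner_self_eq_two hv)⟩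

end RootSystem

section PositiveSystem

variable {n : ℕ}

theorem mem_deltaB_iff_mem_or_neg_mem {v : EucB n} :
    v ∈ DeltaB n ↔ v ∈ DeltaBpos n ∨ -v ∈ DeltaBpos n := by
  constructor
  · rintro (⟨i, j, hij, rfl | rfl | rfl | rfl⟩ | ⟨i, rfl | rfl⟩)
    · exact Or.inl (Or.inl ⟨i, j, hij, Or.inl rfl⟩)
    · exact Or.inl (Or.inl ⟨i, j, hij, Or.inr rfl⟩)
    · exact Or.inr (Or.inl ⟨i, j, hij, Or.inr (by abel)⟩)
    · exact Or.inr (Or.inl ⟨i, j, hij, Or.inl (by abel)⟩)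
    · exact Or.inl (Or.inr ⟨i, rfl⟩)
    · exact Or.inr (Or.inr ⟨i, neg_neg _⟩)
  · rintro ((⟨i, j, hij, rfl | rfl⟩ | ⟨i, rfl⟩) | (⟨i, j, hij, h | h⟩ | ⟨i, h⟩))
    · exact Or.inl ⟨i, j, hij, Or.inl rfl⟩
    · exact Or.inl ⟨i, j, hij, Or.inr (Or.inl rfl)⟩
    · exact Or.inr ⟨i, Or.inl rfl⟩
    · exact Or.inl ⟨i, j, hij, Or.inr (Or.inr (Or.inr (by rw [← neg_neg v, h]; abel)))⟩
    · exact Or.inl ⟨i, j, hij, Or.inr (Or.inr (Or.inl (by rw [← neg_neg v, h]; abel)))⟩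
    · exact Or.inr ⟨i, Or.inr (neg_eq_iff_eq_neg.mp h)⟩

/-- The height functional `eᵢ ↦ n − i`. Indices start at `0`, so that it takes the value `1` on
every simple root `eᵢ − eᵢ₊₁` and `eₙ₋₁`; its positivity on `Δ⁺` separates `Δ⁺` from `−Δ⁺`. -/
def heightB (n : ℕ) : Module.Dual ℝ (EucB n) :=
  ∑ i : Fin n, ((n : ℝ) - (i : ℕ)) • EuclideanSpace.projₗ i

theorem heightB_eB (i : Fin n) : heightB n (eB n i) = (n : ℝ) - (i : ℕ) := by
  simp [heightB, eB]

theorem heightB_pos {v : EucB n} (hv : v ∈ DeltaBpos n) : 0 < heightB n v := by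
  have hlt (i : Fin n) : ((i : ℕ) : ℝ) < n := mod_cast i.isLt
  rcases hv with ⟨i, j, hij, rfl | rfl⟩ | ⟨i, rfl⟩
  · rw [map_add, heightB_eB, heightB_eB]
    linarith [hlt i, hlt j]
  · have : ((i : ℕ) : ℝ) < (j : ℕ) := mod_cast hij
    rw [map_sub, heightB_eB, heightB_eB]
    linarith
  · rw [heightB_eB]
    linarith [hlt i]

theorem neg_notMem_deltaBpos {v : EucB n} (hv : v ∈ DeltaBpos n) : -v ∉ DeltaBpos n := by
  intro hneg
  have := heightB_pos hneg
  rw [map_neg] at this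
  linarith [heightB_pos hv]

theorem neg_notMem_deltaBpos_iff {v : EucB n} (hv : v ∈ DeltaB n) :
    -v ∉ DeltaBpos n ↔ v ∈ DeltaBpos n :=
  ⟨(mem_deltaB_iff_mem_or_neg_mem.mp hv).resolve_right, neg_notMem_deltaBpos⟩

/-- The enumeration of `Δ⁺` by pairs of indices: for `i < j`, the root `eᵢ + eⱼ` sits at `(i, j)`
and `eᵢ − eⱼ` at `(j, i)`, while `eᵢ` sits at `(i, i)`. -/
def posRoot (n : ℕ) (p : Fin n × Fin n) : EucB n :=
  if p.1 < p.2 then eB n p.1 + eB n p.2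
  else if p.2 < p.1 then eB n p.2 - eB n p.1
  else eB n p.1

theorem range_posRoot : Set.range (posRoot n) = DeltaBpos n := by
  ext v
  constructor
  · rintro ⟨⟨i, j⟩, rfl⟩
    unfold posRoot
    split_ifs with hij hji
    exacts [Or.inl ⟨i, j, hij, Or.inl rfl⟩, Or.inl ⟨j, i, hji, Or.inr rfl⟩, Or.inr ⟨i, rfl⟩]
  · rintro (⟨i, j, hij, rfl | rfl⟩ | ⟨i, rfl⟩)
    · exact ⟨(i, j), if_pos hij⟩
    · exact ⟨(j, i), by rw [posRoot, if_neg hij.not_gt, if_pos hij]⟩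
    · exact ⟨(i, i), by simp only [posRoot, lt_irrefl, if_false]⟩

theorem eB_add_eB_eq_iff {i j k l : Fin n} :
    eB n i + eB n j = eB n k + eB n l ↔ i = k ∧ j = l ∨ i = l ∧ j = k := by
  have hsingle := Pi.single_add_single_eq_single_add_single (k := i) (l := j) (m := k) (n := l)
    (one_ne_zero (α := ℝ)) one_ne_zero
  simp only [true_and, one_add_one_eq_two, OfNat.ofNat_ne_zero, false_and, or_false] at hsingle
  rw [← hsingle, ← WithLp.ofLp_injective 2 |>.eq_iff]
  rfl

theorem sum_posRoot_apply (p : Fin n × Fin n) :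
    ∑ t, posRoot n p t = if p.1 < p.2 then 2 else if p.2 < p.1 then 0 else 1 := by
  have hsum (i : Fin n) : ∑ t, eB n i t = 1 := by simp [eB]
  unfold posRoot
  split_ifs
  · simp only [PiLp.add_apply, Finset.sum_add_distrib, hsum, one_add_one_eq_two]
  · simp only [PiLp.sub_apply, Finset.sum_sub_distrib, hsum, sub_self]
  · exact hsum p.1

theorem posRoot_injective : Function.Injective (posRoot n) := by
  rintro ⟨i, j⟩ ⟨k, l⟩ h
  have hsum := congrArg (fun v ↦ ∑ t, v t) h
  simp only [sum_posRoot_apply] at hsum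
  simp only [posRoot] at h
  -- The coordinate sum of a root tells which of `i < j`, `j < i`, `i = j` holds.
  split_ifs at hsum h <;> norm_num at hsum
  · rcases eB_add_eB_eq_iff.mp h with _ | _ <;> grind
  · have := eB_add_eB_eq_iff.mp (sub_eq_sub_iff_add_eq_add.mp h)
    grind
  · have := eB_add_eB_eq_iff.mp (congrArg (fun v ↦ v + v) h)
    grind

theorem finite_deltaBpos : (DeltaBpos n).Finite :=
  range_posRoot (n := n) ▸ Set.finite_range _

theorem ncard_deltaBpos : (DeltaBpos n).ncard = n * n := by
  rw [← range_posRoot, ← Set.image_univ, Set.ncard_image_of_injective _ posRoot_injective,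
    Set.ncard_univ, Nat.card_prod, Nat.card_fin]

theorem finite_deltaB : (DeltaB n).Finite := by
  have hunion : DeltaB n = DeltaBpos n ∪ Neg.neg ⁻¹' DeltaBpos n :=
    Set.ext fun _ ↦ mem_deltaB_iff_mem_or_neg_mem
  rw [hunion]
  exact finite_deltaBpos.union (finite_deltaBpos.preimage neg_injective.injOn)

end PositiveSystem

section WeylGroup

open scoped Pointwise

variable {n : ℕ}

theorem sReflB_apply (α x : EucB n) :
    sReflB n α x = x - (2 / ⟪α, α⟫ * ⟪x, α⟫) • α := by
  have hform (y : EucB n) : corootForm n α y = 2 / ⟪α, α⟫ * ⟪y, α⟫ :=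
    real_inner_smul_right y α _
  by_cases hα : α = 0
  · simp [sReflB, hα]
  · have h2 : corootForm n α α = 2 := by
      rw [hform, div_mul_cancel₀ _ (inner_self_ne_zero.mpr hα)]
    rw [sReflB, dif_pos h2, Module.reflection_apply, hform]

theorem sReflB_eq_reflection (α x : EucB n) : sReflB n α x = (ℝ ∙ α)ᗮ.reflection x := by
  rw [sReflB_apply, Submodule.reflection_orthogonal_apply, Submodule.reflection_singleton_apply,
    real_inner_self_eq_norm_sq, real_inner_comm, neg_sub, two_smul, ← add_smul]
  congr 2
  rw [RCLike.ofReal_real_eq_id, id_eq]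
  ring

theorem inner_sReflB_sReflB (α x y : EucB n) : ⟪sReflB n α x, sReflB n α y⟫ = ⟪x, y⟫ := by
  rw [sReflB_eq_reflection, sReflB_eq_reflection, LinearIsometryEquiv.inner_map_map]

theorem sReflB_mem_intLattice {α x : EucB n} (hα : α ∈ DeltaB n) (hx : x ∈ intLattice (Fin n)) :
    sReflB n α x ∈ intLattice (Fin n) := by
  obtain ⟨hαint, hnorm⟩ := mem_deltaB_iff.mp hα
  obtain ⟨m, hm⟩ := exists_intCast_eq_inner hx hαint
  obtain ⟨k, hk⟩ : ∃ k : ℤ, (k : ℝ) = 2 / ⟪α, α⟫ := by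
    rcases hnorm with h | h
    exacts [⟨2, by rw [h]; norm_num⟩, ⟨1, by rw [h]; norm_num⟩]
  rw [sReflB_apply, ← hm, ← hk, ← Int.cast_mul]
  exact sub_mem hx (intCast_smul_mem_intLattice hαint _)

theorem sReflB_mem_deltaB {α v : EucB n} (hα : α ∈ DeltaB n) (hv : v ∈ DeltaB n) :
    sReflB n α v ∈ DeltaB n := by
  rw [mem_deltaB_iff] at hv ⊢
  rw [inner_sReflB_sReflB]
  exact ⟨sReflB_mem_intLattice hα hv.1, hv.2⟩

theorem weylB_le_stabilizer_deltaB :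
    WeylB n ≤ MulAction.stabilizer (EucB n ≃ₗ[ℝ] EucB n) (DeltaB n) := by
  refine (Subgroup.closure_le _).mpr ?_
  rintro _ ⟨α, hα, rfl⟩
  exact (MulAction.mem_stabilizer_set' finite_deltaB).mpr fun _ hv ↦ sReflB_mem_deltaB hα hv

theorem apply_mem_deltaB_of_mem_weylB {θ : EucB n ≃ₗ[ℝ] EucB n} (hθ : θ ∈ WeylB n) {v : EucB n}
    (hv : v ∈ DeltaB n) : θ v ∈ DeltaB n :=
  (MulAction.mem_stabilizer_set' finite_deltaB).mp (weylB_le_stabilizer_deltaB hθ) hv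

end WeylGroup

section Length

variable {n : ℕ} {θ : EucB n ≃ₗ[ℝ] EucB n}

theorem negB_apply (θ : EucB n ≃ₗ[ℝ] EucB n) (x : EucB n) : negB n θ x = -θ x := rfl

theorem negB_notMem_deltaBpos_iff (hθ : θ ∈ WeylB n) {α : EucB n} (hα : α ∈ DeltaBpos n) :
    negB n θ α ∉ DeltaBpos n ↔ θ α ∈ DeltaBpos n :=
  neg_notMem_deltaBpos_iff (apply_mem_deltaB_of_mem_weylB hθ
    (mem_deltaB_iff_mem_or_neg_mem.mpr (Or.inl hα)))

theorem ker_negB_add_id (θ : EucB n ≃ₗ[ℝ] EucB n) :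
    LinearMap.ker ((negB n θ).toLinearMap + LinearMap.id) =
      LinearMap.ker (θ.toLinearMap - LinearMap.id) := by
  ext x
  simp only [LinearMap.mem_ker, LinearMap.add_apply, LinearMap.sub_apply, LinearMap.id_apply,
    LinearEquiv.coe_coe, negB_apply, neg_add_eq_zero, sub_eq_zero]

theorem two_mul_lenB (θ : EucB n ≃ₗ[ℝ] EucB n) :
    2 * lenB n θ = Nat.card {α : EucB n // α ∈ DeltaBpos n ∧ θ α ∉ DeltaBpos n} +
      Module.finrank ℝ (LinearMap.ker (θ.toLinearMap + LinearMap.id)) := by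
  rw [lenB]
  ring

theorem two_mul_lenB_negB (hθ : θ ∈ WeylB n) :
    2 * lenB n (negB n θ) = Nat.card {α : EucB n // α ∈ DeltaBpos n ∧ θ α ∈ DeltaBpos n} +
      Module.finrank ℝ (LinearMap.ker (θ.toLinearMap - LinearMap.id)) := by
  have hcard : Nat.card {α : EucB n // α ∈ DeltaBpos n ∧ negB n θ α ∉ DeltaBpos n} =
      Nat.card {α : EucB n // α ∈ DeltaBpos n ∧ θ α ∈ DeltaBpos n} :=
    Nat.card_congr (Equiv.subtypeEquivRight fun _ ↦
      and_congr_right fun hα ↦ negB_notMem_deltaBpos_iff hθ hα)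
  rw [two_mul_lenB, hcard, ker_negB_add_id]

theorem card_apply_mem_add_card_apply_notMem_deltaBpos (f : EucB n → EucB n) :
    Nat.card {α : EucB n // α ∈ DeltaBpos n ∧ f α ∈ DeltaBpos n} +
      Nat.card {α : EucB n // α ∈ DeltaBpos n ∧ f α ∉ DeltaBpos n} = n * n := by
  rw [← ncard_deltaBpos]
  exact Set.ncard_inter_add_ncard_sdiff_eq_ncard (DeltaBpos n) (f ⁻¹' DeltaBpos n) finite_deltaBpos

end Length

/-- For every involution `θ ∈ W(Bₙ)`, the lengths of `θ` and `−θ` are complementary: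
`ℓ(−θ) = n(n+1)/2 − ℓ(θ)`.  Equivalently,
`|{α ∈ Δ⁺ : θα ∈ Δ⁺}| + dim ker(θ − id) = 2·ℓ(−θ)`. -/
theorem length_duality (n : ℕ) (hn : 0 < n)
    (θ : EucB n ≃ₗ[ℝ] EucB n) (hθW : θ ∈ WeylB n) (hθ2 : θ * θ = 1) :
    lenB n (negB n θ) = (n * (n + 1) : ℚ) / 2 - lenB n θ ∧
    ((Nat.card {α : EucB n // α ∈ DeltaBpos n ∧ θ α ∈ DeltaBpos n} +
        Module.finrank ℝ ↥(LinearMap.ker (θ.toLinearMap - LinearMap.id)) : ℚ) =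
      2 * lenB n (negB n θ)) := by
  have hnegθ := two_mul_lenB_negB hθW
  refine ⟨?_, hnegθ.symm⟩
  have hcard := congrArg (Nat.cast (R := ℚ)) <|
    card_apply_mem_add_card_apply_notMem_deltaBpos θ
  have hdim := congrArg (Nat.cast (R := ℚ)) <|
    finrank_ker_add_id_add_finrank_ker_sub_id (f := θ.toLinearMap) (DFunLike.congr_fun hθ2)
  rw [finrank_euclideanSpace_fin] at hdim
  push_cast at hcard hdim
  linarith [two_mul_lenB θ]
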